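/- arXiv:2603.27458 — 2 statements merged into one kernel-verified Lean document; each statement's English description precedes it below -/
import Mathlib

section
/- Let C be a bivariate copula admitting a lower tail expansion with tail order κ > 1: there exist a : (0,∞)² → [0,∞), a function ℓ slowly varying at 0, and a remainder R such that C(u·w₁, u·w₂)/u^κ = a(w₁,w₂)·ℓ(u) + R(u; w₁, w₂), where R(u; w₁, w₂) → 0 uniformly as u·w₁ → 0 and u·w₂ → 0. Assume (B1): a(1,r) = a₁·r + o(r) as r ↓ 0 for some a₁ > 0; and (B2): a(1,r) = O(r^ρ) as r → ∞ for some 0 < ρ ≤ κ − 1. Suppose in addition that A(v) := lim_{p↓0} C(p,v)/p exists for every v ∈ (0,1), with locally uniform convergence on (0,1). Then lim_{v↓0} A(v) = 0, i.e., the limiting conditional cdf A has no mass at 0. -/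
/-!
The value `C(x, y)` can be expanded at any level `u`, with weights `x / u` and `y / u`. Comparing
the expansions at the levels `u` and `t u` shows, unless `ℓ → 0`, that slow variation makes `a`
homogeneous of degree `κ`. In the comparison between a level `u ↓ 0` and a fixed level `s`, the
factor `(s / u) ^ κ ≥ 1` then cancels from main terms and remainders alike, so `ℓ` is bounded near
`0`. Hence, for fixed small `v` and `p ↓ 0`, the ratio
`C(p, v) / p = p ^ (κ - 1) (a(1, v / p) ℓ(p) + R)` is at most `K v ^ (κ - 1) + p ^ (κ - 1)`, which
yields `A(v) = O(v ^ (κ - 1))`.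
-/

open Set Filter Topology

/-- A bivariate copula: `C : [0,1]² → [0,1]` with the boundary conditions and the
2-increasing property. -/
def IsCopula (C : ℝ → ℝ → ℝ) : Prop :=
  (∀ u ∈ Icc (0:ℝ) 1, ∀ v ∈ Icc (0:ℝ) 1, C u v ∈ Icc (0:ℝ) 1) ∧
  (∀ u ∈ Icc (0:ℝ) 1, C u 0 = 0) ∧
  (∀ v ∈ Icc (0:ℝ) 1, C 0 v = 0) ∧
  (∀ u ∈ Icc (0:ℝ) 1, C u 1 = u) ∧
  (∀ v ∈ Icc (0:ℝ) 1, C 1 v = v) ∧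
  (∀ u₁ u₂ v₁ v₂ : ℝ, u₁ ∈ Icc (0:ℝ) 1 → u₂ ∈ Icc (0:ℝ) 1 → v₁ ∈ Icc (0:ℝ) 1 →
    v₂ ∈ Icc (0:ℝ) 1 → u₁ ≤ u₂ → v₁ ≤ v₂ →
    0 ≤ C u₂ v₂ - C u₂ v₁ - C u₁ v₂ + C u₁ v₁)

/-- The copula-adjusted probability level `v(q|p;C) = inf{v ∈ [0,1] : C(p,v)/p ≥ q}`. -/
noncomputable def vLevel (C : ℝ → ℝ → ℝ) (p q : ℝ) : ℝ :=
  sInf {v ∈ Icc (0:ℝ) 1 | q ≤ C p v / p}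

/-- The diagonal copula-adjusted probability level `v(p;C) = inf{v ∈ [0,1] : C(p,v) ≥ p²}`. -/
noncomputable def vDiag (C : ℝ → ℝ → ℝ) (p : ℝ) : ℝ :=
  sInf {v ∈ Icc (0:ℝ) 1 | p ^ 2 ≤ C p v}

open Asymptotics

/-- Slow variation at `0`: `ℓ (c * u) / ℓ u → 1` as `u ↓ 0` for every `c > 0`. The sign of `ℓ` is
left free, and `ℓ` cannot vanish near `0` since `x / 0 = 0`. -/
def IsSlowlyVaryingAtZero (ℓ : ℝ → ℝ) : Prop :=
  ∀ c > (0 : ℝ), Tendsto (fun u => ℓ (c * u) / ℓ u) (𝓝[>] 0) (𝓝 1)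

/-- The lower tail expansion `C (u w₁, u w₂) / u ^ κ = a (w₁, w₂) ℓ u + R (u; w₁, w₂)` of order `κ`,
with `R → 0` uniformly as `u w₁ → 0` and `u w₂ → 0`. The remainder is encoded as the difference of
the other two terms. -/
def HasLowerTailExpansion (C : ℝ → ℝ → ℝ) (κ : ℝ) (a : ℝ → ℝ → ℝ) (ℓ : ℝ → ℝ) : Prop :=
  ∀ ε > (0 : ℝ), ∃ δ > (0 : ℝ), ∀ u w₁ w₂ : ℝ, 0 < u → 0 < w₁ → 0 < w₂ →
    u * w₁ ≤ δ → u * w₂ ≤ δ → |C (u * w₁) (u * w₂) / u ^ κ - a w₁ w₂ * ℓ u| ≤ ε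

theorem tendsto_rpow_nhdsGT_zero {s : ℝ} (hs : 0 < s) :
    Tendsto (fun x : ℝ => x ^ s) (𝓝[>] 0) (𝓝 0) := by
  simpa only [Real.zero_rpow hs.ne'] using
    (Real.continuousAt_rpow_const 0 s (Or.inr hs.le)).tendsto.mono_left nhdsWithin_le_nhds

theorem IsSlowlyVaryingAtZero.eventually_ne_zero {ℓ : ℝ → ℝ} (hℓ : IsSlowlyVaryingAtZero ℓ) :
    ∀ᶠ u in 𝓝[>] (0 : ℝ), ℓ u ≠ 0 := by
  filter_upwards [(hℓ 1 one_pos).eventually_ne one_ne_zero] with u hu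
  exact (div_ne_zero_iff.mp hu).2

namespace HasLowerTailExpansion

variable {C a : ℝ → ℝ → ℝ} {κ : ℝ} {ℓ : ℝ → ℝ}

theorem of_remainder {R : ℝ → ℝ → ℝ → ℝ}
    (hexp : ∀ u w₁ w₂ : ℝ, 0 < u → 0 < w₁ → 0 < w₂ → u * w₁ ≤ 1 → u * w₂ ≤ 1 →
      C (u * w₁) (u * w₂) / u ^ κ = a w₁ w₂ * ℓ u + R u w₁ w₂)
    (hR : ∀ ε > (0 : ℝ), ∃ δ > (0 : ℝ), ∀ u w₁ w₂ : ℝ, 0 < u → 0 < w₁ → 0 < w₂ →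
      u * w₁ ≤ δ → u * w₂ ≤ δ → |R u w₁ w₂| ≤ ε) :
    HasLowerTailExpansion C κ a ℓ := by
  intro ε hε
  obtain ⟨δ, hδ, hRδ⟩ := hR ε hε
  refine ⟨min 1 δ, lt_min one_pos hδ, fun u w₁ w₂ hu hw₁ hw₂ h₁ h₂ => ?_⟩
  rw [le_min_iff] at h₁ h₂
  rw [hexp u w₁ w₂ hu hw₁ hw₂ h₁.1 h₂.1, add_sub_cancel_left]
  exact hRδ u w₁ w₂ hu hw₁ hw₂ h₁.2 h₂.2

theorem exists_abs_rescale_sub_le (h : HasLowerTailExpansion C κ a ℓ) {ε : ℝ} (hε : 0 < ε) :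
    ∃ δ > (0 : ℝ), ∀ u t w₁ w₂ : ℝ, 0 < u → 0 < t → 0 < w₁ → 0 < w₂ →
      t * u * w₁ ≤ δ → t * u * w₂ ≤ δ →
      |a (t * w₁) (t * w₂) * ℓ u - t ^ κ * (a w₁ w₂ * ℓ (t * u))| ≤ (1 + t ^ κ) * ε := by
  obtain ⟨δ, hδ, hexp⟩ := h ε hε
  refine ⟨δ, hδ, fun u t w₁ w₂ hu ht hw₁ hw₂ h₁ h₂ => ?_⟩
  have arg_eq (w : ℝ) : u * (t * w) = t * u * w := by ring
  have at_u := hexp u (t * w₁) (t * w₂) hu (by positivity) (by positivity)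
    (by rwa [arg_eq]) (by rwa [arg_eq])
  have at_tu := hexp (t * u) w₁ w₂ (by positivity) hw₁ hw₂ h₁ h₂
  rw [arg_eq, arg_eq] at at_u
  have htκ : 0 < t ^ κ := Real.rpow_pos_of_pos ht κ
  set c := C (t * u * w₁) (t * u * w₂)
  have value_eq : t ^ κ * (c / (t * u) ^ κ) = c / u ^ κ := by
    rw [Real.mul_rpow ht.le hu.le, ← mul_div_assoc, mul_div_mul_left _ _ htκ.ne']
  calc |a (t * w₁) (t * w₂) * ℓ u - t ^ κ * (a w₁ w₂ * ℓ (t * u))|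
      = |t ^ κ * (c / (t * u) ^ κ - a w₁ w₂ * ℓ (t * u))
          - (c / u ^ κ - a (t * w₁) (t * w₂) * ℓ u)| := by
        rw [mul_sub, value_eq]
        ring_nf
    _ ≤ t ^ κ * |c / (t * u) ^ κ - a w₁ w₂ * ℓ (t * u)|
          + |c / u ^ κ - a (t * w₁) (t * w₂) * ℓ u| := by
        simpa only [abs_mul, abs_of_pos htκ] using
          abs_sub (t ^ κ * (c / (t * u) ^ κ - a w₁ w₂ * ℓ (t * u)))
            (c / u ^ κ - a (t * w₁) (t * w₂) * ℓ u)
    _ ≤ t ^ κ * ε + ε := by gcongr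
    _ = (1 + t ^ κ) * ε := by ring

theorem tendsto_rescale_sub (h : HasLowerTailExpansion C κ a ℓ) {t w₁ w₂ : ℝ} (ht : 0 < t)
    (hw₁ : 0 < w₁) (hw₂ : 0 < w₂) :
    Tendsto (fun u => a (t * w₁) (t * w₂) * ℓ u - t ^ κ * (a w₁ w₂ * ℓ (t * u)))
      (𝓝[>] 0) (𝓝 0) := by
  rw [Metric.tendsto_nhds]
  intro ε hε
  obtain ⟨δ, hδ, hdiff⟩ := h.exists_abs_rescale_sub_le (ε := ε / (2 * (1 + t ^ κ))) (by positivity)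
  have small (w : ℝ) : ∀ᶠ u in 𝓝[>] (0 : ℝ), t * u * w < δ := by
    have : Tendsto (fun u : ℝ => t * u * w) (𝓝 0) (𝓝 (t * 0 * w)) :=
      Continuous.tendsto (by fun_prop) 0
    exact (this.eventually_lt_const (by simpa using hδ)).filter_mono nhdsWithin_le_nhds
  filter_upwards [small w₁, small w₂, self_mem_nhdsWithin] with u h₁ h₂ hu
  rw [Real.dist_0_eq_abs]
  calc |a (t * w₁) (t * w₂) * ℓ u - t ^ κ * (a w₁ w₂ * ℓ (t * u))|
      ≤ (1 + t ^ κ) * (ε / (2 * (1 + t ^ κ))) := hdiff u t w₁ w₂ hu ht hw₁ hw₂ h₁.le h₂.le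
    _ = ε / 2 := by field_simp
    _ < ε := half_lt_self hε

theorem homogeneous_of_not_tendsto_zero (h : HasLowerTailExpansion C κ a ℓ)
    (hℓ : IsSlowlyVaryingAtZero ℓ) (hℓ₀ : ¬ Tendsto ℓ (𝓝[>] 0) (𝓝 0)) {t w₁ w₂ : ℝ} (ht : 0 < t)
    (hw₁ : 0 < w₁) (hw₂ : 0 < w₂) :
    a (t * w₁) (t * w₂) = t ^ κ * a w₁ w₂ := by
  by_contra hne
  have factor : Tendsto (fun u => a (t * w₁) (t * w₂) - t ^ κ * a w₁ w₂ * (ℓ (t * u) / ℓ u))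
      (𝓝[>] 0) (𝓝 (a (t * w₁) (t * w₂) - t ^ κ * a w₁ w₂)) := by
    simpa only [mul_one] using ((hℓ t ht).const_mul (t ^ κ * a w₁ w₂)).const_sub _
  have quotient := (h.tendsto_rescale_sub ht hw₁ hw₂).div factor (sub_ne_zero.mpr hne)
  rw [zero_div] at quotient
  refine hℓ₀ (quotient.congr' ?_)
  filter_upwards [hℓ.eventually_ne_zero, factor.eventually_ne (sub_ne_zero.mpr hne)]
    with u hu hfactor
  rw [Pi.div_apply, div_eq_iff hfactor]
  field_simp

theorem exists_abs_mul_abs_sub_le (h : HasLowerTailExpansion C κ a ℓ) (hκ : 0 ≤ κ) {w₁ w₂ : ℝ}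
    (hw₁ : 0 < w₁) (hw₂ : 0 < w₂)
    (hom : ∀ t > (0 : ℝ), a (t * w₁) (t * w₂) = t ^ κ * a w₁ w₂) {ε : ℝ} (hε : 0 < ε) :
    ∃ s > (0 : ℝ), ∀ u ∈ Ioo 0 s, |a w₁ w₂| * |ℓ u - ℓ s| ≤ 2 * ε := by
  obtain ⟨δ, hδ, hdiff⟩ := h.exists_abs_rescale_sub_le hε
  obtain ⟨s, hs, hs₁, hs₂⟩ : ∃ s > 0, s * w₁ ≤ δ ∧ s * w₂ ≤ δ := by
    refine ⟨δ / max w₁ w₂, by positivity, ?_, ?_⟩ <;>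
      rw [div_mul_comm] <;>
      exact mul_le_of_le_one_left hδ.le ((div_le_one (by positivity)).mpr (by simp))
  refine ⟨s, hs, fun u ⟨hu, hus⟩ => ?_⟩
  set t := s / u
  have ht : 0 < t := by positivity
  have htu : t * u = s := div_mul_cancel₀ s hu.ne'
  have htκ : 0 < t ^ κ := Real.rpow_pos_of_pos ht κ
  have one_le_htκ : 1 ≤ t ^ κ := Real.one_le_rpow ((one_le_div hu).mpr hus.le) hκ
  have hdiff_s := hdiff u t w₁ w₂ hu ht hw₁ hw₂ (by rwa [htu]) (by rwa [htu])
  rw [hom t ht, htu] at hdiff_s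
  refine le_of_mul_le_mul_left ?_ htκ
  calc t ^ κ * (|a w₁ w₂| * |ℓ u - ℓ s|)
      = |t ^ κ * (a w₁ w₂ * (ℓ u - ℓ s))| := by rw [abs_mul, abs_mul, abs_of_pos htκ]
    _ = |t ^ κ * a w₁ w₂ * ℓ u - t ^ κ * (a w₁ w₂ * ℓ s)| := by ring_nf
    _ ≤ (1 + t ^ κ) * ε := hdiff_s
    _ ≤ (t ^ κ + t ^ κ) * ε := by gcongr
    _ = t ^ κ * (2 * ε) := by ring

theorem slowlyVarying_isBigO_one (h : HasLowerTailExpansion C κ a ℓ) (hκ : 0 ≤ κ)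
    (hℓ : IsSlowlyVaryingAtZero ℓ) {w₁ w₂ : ℝ} (hw₁ : 0 < w₁) (hw₂ : 0 < w₂)
    (ha : a w₁ w₂ ≠ 0) :
    ℓ =O[𝓝[>] 0] (fun _ => (1 : ℝ)) := by
  by_cases hℓ₀ : Tendsto ℓ (𝓝[>] 0) (𝓝 0)
  · exact hℓ₀.isBigO_one ℝ
  have hom (t : ℝ) (ht : 0 < t) : a (t * w₁) (t * w₂) = t ^ κ * a w₁ w₂ :=
    h.homogeneous_of_not_tendsto_zero hℓ hℓ₀ ht hw₁ hw₂
  obtain ⟨s, hs, hosc⟩ := h.exists_abs_mul_abs_sub_le hκ hw₁ hw₂ hom one_pos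
  refine IsBigO.of_bound (|ℓ s| + 2 * 1 / |a w₁ w₂|) ?_
  filter_upwards [Ioo_mem_nhdsGT hs] with u hu
  have hosc_u : |ℓ u - ℓ s| ≤ 2 * 1 / |a w₁ w₂| := (le_div_iff₀' (abs_pos.mpr ha)).mpr (hosc u hu)
  simp only [Real.norm_eq_abs, norm_one, mul_one] at hosc_u ⊢
  linarith [abs_sub_abs_le_abs_sub (ℓ u) (ℓ s)]

theorem mul_slowlyVarying_isBigO (h : HasLowerTailExpansion C κ a ℓ) (hκ : 0 ≤ κ)
    (hℓ : IsSlowlyVaryingAtZero ℓ) {g : ℝ → ℝ} (ha : a 1 =O[atTop] g) :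
    (fun x : ℝ × ℝ => a 1 x.2 * ℓ x.1) =O[𝓝[>] 0 ×ˢ atTop] (fun x => g x.2) := by
  by_cases hzero : ∀ r > 0, a 1 r = 0
  · refine IsBigO.of_bound 0 ?_
    filter_upwards [(eventually_gt_atTop (0 : ℝ)).prod_inr (𝓝[>] (0 : ℝ))] with x hx
    simp [hzero x.2 hx]
  · push Not at hzero
    obtain ⟨r, hr, har⟩ := hzero
    have ha_snd : (fun x : ℝ × ℝ => a 1 x.2) =O[𝓝[>] 0 ×ˢ atTop] (fun x => g x.2) :=
      ha.comp_snd _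
    have hℓ_fst : (fun x : ℝ × ℝ => ℓ x.1) =O[𝓝[>] 0 ×ˢ atTop] (fun _ => (1 : ℝ)) :=
      (h.slowlyVarying_isBigO_one hκ hℓ one_pos hr har).comp_fst _
    simpa only [mul_one] using ha_snd.mul hℓ_fst

theorem exists_abs_div_sub_le (h : HasLowerTailExpansion C κ a ℓ) {ε : ℝ} (hε : 0 < ε) :
    ∃ δ > (0 : ℝ), ∀ p ∈ Ioc 0 δ, ∀ v ∈ Ioc 0 δ,
      |C p v / p - p ^ (κ - 1) * (a 1 (v / p) * ℓ p)| ≤ p ^ (κ - 1) * ε := by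
  obtain ⟨δ, hδ, hexp⟩ := h ε hε
  refine ⟨δ, hδ, fun p ⟨hp, hpδ⟩ v ⟨hv, hvδ⟩ => ?_⟩
  have hpv : p * (v / p) = v := mul_div_cancel₀ v hp.ne'
  have hexp_p := hexp p 1 (v / p) hp one_pos (by positivity) (by rwa [mul_one]) (by rwa [hpv])
  rw [mul_one, hpv] at hexp_p
  have hpκ : 0 < p ^ (κ - 1) := Real.rpow_pos_of_pos hp _
  have hdiv : C p v / p = p ^ (κ - 1) * (C p v / p ^ κ) := by
    rw [Real.rpow_sub_one hp.ne']
    field_simp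
  rw [hdiv, ← mul_sub, abs_mul, abs_of_pos hpκ]
  gcongr

theorem exists_eventually_abs_div_le (h : HasLowerTailExpansion C κ a ℓ) (hκ : 0 ≤ κ)
    (hℓ : IsSlowlyVaryingAtZero ℓ) (ha : a 1 =O[atTop] (fun r : ℝ => r ^ (κ - 1))) :
    ∃ K δ : ℝ, 0 < δ ∧ ∀ v ∈ Ioc 0 δ,
      ∀ᶠ p in 𝓝[>] (0 : ℝ), |C p v / p| ≤ K * v ^ (κ - 1) + p ^ (κ - 1) := by
  obtain ⟨K, hK⟩ := (h.mul_slowlyVarying_isBigO hκ hℓ ha).bound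
  obtain ⟨δ, hδ, hdiv⟩ := h.exists_abs_div_sub_le one_pos
  refine ⟨K, δ, hδ, fun v hv => ?_⟩
  have ratio_atTop : Tendsto (fun p => v / p) (𝓝[>] 0) atTop :=
    tendsto_inv_nhdsGT_zero.const_mul_atTop hv.1
  filter_upwards [(tendsto_id.prodMk ratio_atTop).eventually hK, Ioc_mem_nhdsGT hδ] with p hKp hp
  have hp₀ : 0 < p := hp.1
  have hv₀ : 0 < v := hv.1
  have main_le : |a 1 (v / p) * ℓ p| ≤ K * (v / p) ^ (κ - 1) := by
    simpa only [id, Real.norm_eq_abs, abs_of_pos (Real.rpow_pos_of_pos (div_pos hv₀ hp₀) (κ - 1))]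
      using hKp
  have hpκ : 0 < p ^ (κ - 1) := Real.rpow_pos_of_pos hp₀ _
  calc |C p v / p|
      ≤ |p ^ (κ - 1) * (a 1 (v / p) * ℓ p)| + p ^ (κ - 1) * 1 := by
        linarith [hdiv p hp v hv, abs_sub_abs_le_abs_sub (C p v / p)
          (p ^ (κ - 1) * (a 1 (v / p) * ℓ p))]
    _ ≤ p ^ (κ - 1) * (K * (v / p) ^ (κ - 1)) + p ^ (κ - 1) * 1 := by
        rw [abs_mul, abs_of_pos hpκ]
        gcongr
    _ = K * v ^ (κ - 1) + p ^ (κ - 1) := by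
        rw [Real.div_rpow hv₀.le hp₀.le]
        field_simp

end HasLowerTailExpansion

theorem no_mass_at_zero_of_tail_order_gt_one_general {C a : ℝ → ℝ → ℝ} {κ : ℝ} {ℓ A : ℝ → ℝ}
    (hC : HasLowerTailExpansion C κ a ℓ) (hκ : 1 < κ) (hℓ : IsSlowlyVaryingAtZero ℓ)
    (ha : a 1 =O[atTop] (fun r : ℝ => r ^ (κ - 1)))
    (hA : ∀ᶠ v in 𝓝[>] (0 : ℝ), Tendsto (fun p => C p v / p) (𝓝[>] 0) (𝓝 (A v))) :
    A =O[𝓝[>] 0] (fun v : ℝ => v ^ (κ - 1)) := by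
  obtain ⟨K, δ, hδ, hbound⟩ := hC.exists_eventually_abs_div_le (zero_le_one.trans hκ.le) hℓ ha
  refine IsBigO.of_bound K ?_
  filter_upwards [hA, Ioc_mem_nhdsGT hδ] with v hAv hv
  have bound_tendsto : Tendsto (fun p : ℝ => K * v ^ (κ - 1) + p ^ (κ - 1)) (𝓝[>] 0)
      (𝓝 (K * v ^ (κ - 1))) := by
    simpa only [add_zero] using (tendsto_rpow_nhdsGT_zero (sub_pos.mpr hκ)).const_add _
  rw [Real.norm_eq_abs, Real.norm_eq_abs, abs_of_pos (Real.rpow_pos_of_pos hv.1 _)]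
  exact le_of_tendsto_of_tendsto hAv.abs bound_tendsto (hbound v hv)

/-- If the copula admits a lower tail expansion with tail order `κ > 1` (with slowly varying
`ℓ`, boundary conditions (B1) and (B2)), and the limiting conditional cdf
`A(v) = lim_{p↓0} C(p,v)/p` exists with locally uniform convergence on `(0,1)`,
then `A(0⁺) = 0`: the limiting conditional cdf has no mass at `0`. -/
theorem no_mass_at_zero_of_tail_order_gt_one (C : ℝ → ℝ → ℝ) (hC : IsCopula C)
    (κ ρ a₁ : ℝ) (a : ℝ → ℝ → ℝ) (ℓ : ℝ → ℝ) (R : ℝ → ℝ → ℝ → ℝ) (A : ℝ → ℝ)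
    (hκ : 1 < κ)
    (hℓpos : ∀ u ∈ Ioo (0:ℝ) 1, 0 < ℓ u)
    (hslow : ∀ c > (0:ℝ), Tendsto (fun u => ℓ (c * u) / ℓ u) (𝓝[>] (0:ℝ)) (𝓝 1))
    (hann : ∀ w₁ > (0:ℝ), ∀ w₂ > (0:ℝ), 0 ≤ a w₁ w₂)
    (hexp : ∀ u w₁ w₂ : ℝ, 0 < u → 0 < w₁ → 0 < w₂ → u * w₁ ≤ 1 → u * w₂ ≤ 1 →
      C (u * w₁) (u * w₂) / u ^ κ = a w₁ w₂ * ℓ u + R u w₁ w₂)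
    (hR : ∀ ε > (0:ℝ), ∃ δ > (0:ℝ), ∀ u w₁ w₂ : ℝ, 0 < u → 0 < w₁ → 0 < w₂ →
      u * w₁ ≤ δ → u * w₂ ≤ δ → |R u w₁ w₂| ≤ ε)
    -- (B1): `a(1,r) = a₁ r + o(r)` as `r ↓ 0`, with `a₁ > 0`
    (ha₁ : 0 < a₁)
    (hB1 : Tendsto (fun r => a 1 r / r) (𝓝[>] (0:ℝ)) (𝓝 a₁))
    -- (B2): `a(1,r) = O(r^ρ)` as `r → ∞` for some `0 < ρ ≤ κ − 1`
    (hρ : 0 < ρ) (hρκ : ρ ≤ κ - 1)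
    (hB2 : ∃ M > (0:ℝ), ∃ r₀ > (0:ℝ), ∀ r ≥ r₀, a 1 r ≤ M * r ^ ρ)
    (hA : ∀ v ∈ Ioo (0:ℝ) 1, Tendsto (fun p => C p v / p) (𝓝[>] (0:ℝ)) (𝓝 (A v)))
    (hunif : ∀ b c : ℝ, 0 < b → b < c → c < 1 →
      TendstoUniformlyOn (fun p v => C p v / p) A (𝓝[>] (0:ℝ)) (Icc b c)) :
    Tendsto A (𝓝[>] (0:ℝ)) (𝓝 0) := by
  have ha : a 1 =O[atTop] (fun r : ℝ => r ^ (κ - 1)) := by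
    obtain ⟨M, hMpos, r₀, -, hM⟩ := hB2
    refine IsBigO.of_bound M ?_
    filter_upwards [eventually_ge_atTop r₀, eventually_ge_atTop 1] with r hr₀ hr₁
    rw [Real.norm_of_nonneg (hann 1 one_pos r (by linarith)), Real.norm_of_nonneg (by positivity)]
    exact (hM r hr₀).trans (by gcongr)
  have hA' : ∀ᶠ v in 𝓝[>] (0 : ℝ), Tendsto (fun p => C p v / p) (𝓝[>] 0) (𝓝 (A v)) := by
    filter_upwards [Ioo_mem_nhdsGT one_pos] with v hv using hA v hv
  exact (no_mass_at_zero_of_tail_order_gt_one_general (.of_remainder hexp hR) hκ hslow ha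
    hA').trans_tendsto (tendsto_rpow_nhdsGT_zero (sub_pos.mpr hκ))
end

section
/- Let C be a bivariate copula and suppose A : (0,1) → [0,1] satisfies C(p,v)/p → A(v) as p ↓ 0 for every v ∈ (0,1), with locally uniform convergence on (0,1). If lim_{v↓0} A(v) = 0, lim_{v↑1} A(v) ∈ (0,1], and inf{v ∈ (0,1) : A(v) > 0} = 0, then v(p; C) → 0 as p ↓ 0. -/
open Set Filter Topology

/-!
Pick `v` arbitrarily close to `0` with `A v > 0`. As `p ↓ 0`, the ratio `C p v / p` tends to
`A v > 0` whereas `p` tends to `0`, so `p ≤ C p v / p`, that is `p ^ 2 ≤ C p v`, for all small `p`.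
Hence `vDiag C p ≤ v` for all small `p`.
-/

theorem vDiag_nonneg (C : ℝ → ℝ → ℝ) (p : ℝ) : 0 ≤ vDiag C p :=
  Real.sInf_nonneg fun _ hv => hv.1.1

theorem vDiag_le {C : ℝ → ℝ → ℝ} {p v : ℝ} (hv : v ∈ Icc (0 : ℝ) 1) (h : p ^ 2 ≤ C p v) :
    vDiag C p ≤ v :=
  csInf_le ⟨0, fun _ hw => hw.1.1⟩ ⟨hv, h⟩

theorem tendsto_vDiag_zero_of_frequently {C : ℝ → ℝ → ℝ} {l : Filter ℝ}
    (h : ∃ᶠ v in 𝓝[>] (0 : ℝ), ∀ᶠ p in l, p ^ 2 ≤ C p v) :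
    Tendsto (vDiag C) l (𝓝 0) := by
  refine tendsto_order.2
    ⟨fun a ha => .of_forall fun p => ha.trans_le (vDiag_nonneg C p), fun ε hε => ?_⟩
  have hsmall : ∀ᶠ v in 𝓝[>] (0 : ℝ), v ∈ Ioo 0 (min ε 1) :=
    Ioo_mem_nhdsGT (lt_min hε one_pos)
  obtain ⟨v, hsq, hv_pos, hv_lt⟩ := (h.and_eventually hsmall).exists
  obtain ⟨hvε, hv_one⟩ := lt_min_iff.1 hv_lt
  exact hsq.mono fun p hp => (vDiag_le ⟨hv_pos.le, hv_one.le⟩ hp).trans_lt hvε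

theorem eventually_sq_le_of_tendsto_div_pos {𝕜 : Type*} [Field 𝕜] [LinearOrder 𝕜]
    [IsStrictOrderedRing 𝕜] [TopologicalSpace 𝕜] [OrderClosedTopology 𝕜] {f : 𝕜 → 𝕜} {a : 𝕜}
    (hf : Tendsto (fun x => f x / x) (𝓝[>] 0) (𝓝 a)) (ha : 0 < a) :
    ∀ᶠ x in 𝓝[>] 0, x ^ 2 ≤ f x := by
  have hid : Tendsto (fun x : 𝕜 => x) (𝓝[>] 0) (𝓝 0) := nhdsWithin_le_nhds
  filter_upwards [hid.eventually_lt hf ha, self_mem_nhdsWithin] with x hlt hx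
  rw [sq]
  exact ((lt_div_iff₀ hx).1 hlt).le

theorem frequently_nhdsGT_mem_of_isGLB {α : Type*} [TopologicalSpace α] [LinearOrder α]
    [OrderTopology α] {s : Set α} {a : α} (h : IsGLB s a) (hs : s.Nonempty) (ha : a ∉ s) :
    ∃ᶠ x in 𝓝[>] a, x ∈ s := by
  refine frequently_nhdsWithin_iff.2 ((frequently_nhdsWithin_iff.1 (h.frequently_mem hs)).mono ?_)
  rintro x ⟨hxs, hax⟩
  exact ⟨hxs, lt_of_le_of_ne hax (ne_of_mem_of_not_mem hxs ha).symm⟩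

theorem frequently_nhdsGT_lt_of_sInf_eq {α β : Type*} [ConditionallyCompleteLinearOrder α]
    [DenselyOrdered α] [TopologicalSpace α] [OrderTopology α] [LinearOrder β] [TopologicalSpace β]
    [OrderClosedTopology β] {f : α → β} {a b : α} {c d : β} (hab : a < b)
    (hf : Tendsto f (𝓝[<] b) (𝓝 d)) (hcd : c < d) (hinf : sInf {x ∈ Ioo a b | c < f x} = a) :
    ∃ᶠ x in 𝓝[>] a, c < f x := by
  have : (𝓝[<] b).NeBot := nhdsLT_neBot_of_exists_lt ⟨a, hab⟩
  have hne : {x ∈ Ioo a b | c < f x}.Nonempty :=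
    (Eventually.and (Ioo_mem_nhdsLT hab) (hf.eventually_const_lt hcd)).exists
  have hglb : IsGLB {x ∈ Ioo a b | c < f x} a := by
    simpa only [hinf] using isGLB_csInf hne ⟨a, fun x hx => hx.1.1.le⟩
  exact (frequently_nhdsGT_mem_of_isGLB hglb hne fun ha => ha.1.1.false).mono fun _ hx => hx.2

theorem vDiag_tendsto_zero_of_support_reaching_zero_general {C : ℝ → ℝ → ℝ} {A : ℝ → ℝ}
    (hA : ∀ᶠ v in 𝓝[>] (0 : ℝ), Tendsto (fun p => C p v / p) (𝓝[>] (0 : ℝ)) (𝓝 (A v)))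
    (hsupp : ∃ᶠ v in 𝓝[>] (0 : ℝ), 0 < A v) :
    Tendsto (vDiag C) (𝓝[>] (0 : ℝ)) (𝓝 0) :=
  tendsto_vDiag_zero_of_frequently <| (hsupp.and_eventually hA).mono
    fun _ ⟨hpos, hlim⟩ => eventually_sq_le_of_tendsto_div_pos hlim hpos

/-- If the limiting conditional cdf `A` has no mass at `0`, positive mass `A(1⁻) ∈ (0,1]`
before `1`, and `inf{v ∈ (0,1) : A(v) > 0} = 0`, then `v(p;C) → 0` as `p ↓ 0`. -/
theorem vDiag_tendsto_zero_of_support_reaching_zero (C : ℝ → ℝ → ℝ) (hC : IsCopula C)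
    (A : ℝ → ℝ) (a₁ : ℝ)
    (hArange : ∀ v ∈ Ioo (0:ℝ) 1, A v ∈ Icc (0:ℝ) 1)
    (hA : ∀ v ∈ Ioo (0:ℝ) 1, Tendsto (fun p => C p v / p) (𝓝[>] (0:ℝ)) (𝓝 (A v)))
    (hunif : ∀ a b : ℝ, 0 < a → a < b → b < 1 →
      TendstoUniformlyOn (fun p v => C p v / p) A (𝓝[>] (0:ℝ)) (Icc a b))
    (hp₀ : Tendsto A (𝓝[>] (0:ℝ)) (𝓝 0))
    (hp₁ : Tendsto A (𝓝[<] (1:ℝ)) (𝓝 a₁)) (ha₁ : a₁ ∈ Ioc (0:ℝ) 1)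
    (hsupp : sInf {v ∈ Ioo (0:ℝ) 1 | 0 < A v} = 0) :
    Tendsto (fun p => vDiag C p) (𝓝[>] (0:ℝ)) (𝓝 0) :=
  vDiag_tendsto_zero_of_support_reaching_zero_general
    (eventually_of_mem (Ioo_mem_nhdsGT one_pos) hA)
    (frequently_nhdsGT_lt_of_sInf_eq one_pos hp₁ ha₁.1 hsupp)
end
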